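/- arXiv:1112.3690 — 3 statements merged into one kernel-verified Lean document; each statement's English description precedes it below -/
import Mathlib

section
/- Let α ∈ (0,1), ρ ∈ (0,1), ρ̂ = 1−ρ, and x > 1. Then (sin(παρ̂)/π)·(x+1)^{αρ}·(x−1)^{αρ̂}·∫_{−1}^{1} (1+u)^{−αρ} (1−u)^{−αρ̂} (x−u)^{−1} du = (Γ(1−αρ)/(Γ(αρ̂)Γ(1−α)))·∫_0^{2/(x+1)} s^{−α} (1−s)^{αρ̂−1} ds. -/
/-!
Put `a = αρ` and `b = α(1 - ρ)`. The substitution `u = 1 - 2 v` turns the integral on the left into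
Euler's integral with `p = 1 - b`, `q = 1 - a`, `r = 1` and `z = -2 / (x - 1)`, and Pfaff's
transformation replaces it by the one with `r = p + q - 1` and `z = 2 / (x + 1)`. For this value of
`r` it is an incomplete Beta integral: integrate `s ^ (r - 1) * (1 - s * y) ^ (-(r + 1))` against
the Beta weight in `y` and over `s ∈ (0, z)`. Both orders of integration can be evaluated, because
Euler's integral with `r = p + q` is a power times a Beta value, by Pfaff's transformation again.
Euler's reflection formula adjusts the constants.
-/

open MeasureTheory

theorem intervalIntegral_swap_mul_continuousOn {f g : ℝ → ℝ} {k : ℝ → ℝ → ℝ} {a b c d : ℝ}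
    (hf : IntervalIntegrable f volume a b) (hg : IntervalIntegrable g volume c d)
    (hk : ContinuousOn (Function.uncurry k) (Set.uIcc a b ×ˢ Set.uIcc c d)) :
    ∫ x in a..b, ∫ y in c..d, f x * g y * k x y =
      ∫ y in c..d, ∫ x in a..b, f x * g y * k x y := by
  rw [intervalIntegrable_iff] at hf hg
  have h_prod : IntegrableOn (fun z : ℝ × ℝ => f z.1 * g z.2) (Set.uIoc a b ×ˢ Set.uIoc c d) := by
    rw [IntegrableOn, Measure.volume_eq_prod, ← Measure.prod_restrict]
    exact hf.mul_prod hg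
  have h_kernel := h_prod.mul_continuousOn_of_subset hk
    (measurableSet_uIoc.prod measurableSet_uIoc) (isCompact_uIcc.prod isCompact_uIcc)
    (Set.prod_mono Set.uIoc_subset_uIcc Set.uIoc_subset_uIcc)
  rw [IntegrableOn, Measure.volume_eq_prod, ← Measure.prod_restrict] at h_kernel
  simp only [intervalIntegral.intervalIntegral_eq_integral_uIoc _ c d,
    intervalIntegral.integral_smul]
  rw [intervalIntegral_integral_swap h_kernel]

theorem ofReal_beta_integrand {p q y : ℝ} (hy0 : 0 ≤ y) (hy1 : y ≤ 1) :
    ((y ^ (p - 1) * (1 - y) ^ (q - 1) : ℝ) : ℂ) =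
      (y : ℂ) ^ ((p : ℂ) - 1) * (1 - (y : ℂ)) ^ ((q : ℂ) - 1) := by
  push_cast [Complex.ofReal_cpow hy0, Complex.ofReal_cpow (sub_nonneg.mpr hy1)]
  rfl

theorem intervalIntegrable_beta {p q : ℝ} (hp : 0 < p) (hq : 0 < q) :
    IntervalIntegrable (fun y : ℝ => y ^ (p - 1) * (1 - y) ^ (q - 1)) volume 0 1 := by
  have h := Complex.betaIntegral_convergent (u := p) (v := q) (by simpa) (by simpa)
  rw [intervalIntegrable_iff_integrableOn_Ioc_of_le zero_le_one] at h ⊢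
  refine IntegrableOn.congr_fun (Integrable.re h) (fun y hy => ?_) measurableSet_Ioc
  rw [← ofReal_beta_integrand hy.1.le hy.2, RCLike.re_to_complex, Complex.ofReal_re]

theorem integral_beta {p q : ℝ} (hp : 0 < p) (hq : 0 < q) :
    ∫ y in (0:ℝ)..1, y ^ (p - 1) * (1 - y) ^ (q - 1) = ProbabilityTheory.beta p q := by
  rw [ProbabilityTheory.beta_eq_betaIntegralReal p q hp hq, Complex.betaIntegral,
    ← Complex.ofReal_re (∫ y in (0:ℝ)..1, _), ← intervalIntegral.integral_ofReal]
  congr 1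
  refine intervalIntegral.integral_congr fun y hy => ?_
  rw [Set.uIcc_of_le zero_le_one] at hy
  exact ofReal_beta_integrand hy.1 hy.2

theorem one_sub_mul_pos {z y : ℝ} (hz : z < 1) (hy : y ∈ Set.Icc (0 : ℝ) 1) : 0 < 1 - z * y := by
  nlinarith [mul_nonneg hy.1 (sub_nonneg.mpr hz.le), hy.2]

theorem integral_comp_mobius (g : ℝ → ℝ) {z : ℝ} (hz : z < 1) :
    ∫ y in (0:ℝ)..1, g ((1 - z) * y / (1 - z * y)) * ((1 - z) / (1 - z * y) ^ 2) =
      ∫ w in (0:ℝ)..1, g w := by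
  have h_deriv : ∀ y ∈ Set.Icc (0:ℝ) 1, HasDerivAt (fun y => (1 - z) * y / (1 - z * y))
      ((1 - z) / (1 - z * y) ^ 2) y := fun y hy => by
    have h_num : HasDerivAt (fun y : ℝ => (1 - z) * y) (1 - z) y := by
      simpa using (hasDerivAt_id y).const_mul (1 - z)
    have h_den : HasDerivAt (fun y : ℝ => 1 - z * y) (-z) y := by
      simpa using ((hasDerivAt_id y).const_mul z).const_sub 1
    convert! h_num.div h_den (one_sub_mul_pos hz hy).ne' using 1
    ring
  have h_sub := intervalIntegral.integral_comp_mul_deriv_of_deriv_nonneg (g := g)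
    (fun y hy => (h_deriv y (by rwa [Set.uIcc_of_le zero_le_one] at hy))
      |>.continuousAt.continuousWithinAt)
    (fun y hy => h_deriv y (Set.Ioo_subset_Icc_self
      (by rwa [min_eq_left zero_le_one, max_eq_right zero_le_one] at hy)))
    (fun y _ => div_nonneg (sub_nonneg.mpr hz.le) (sq_nonneg _))
  simpa [div_self (sub_pos.mpr hz).ne'] using h_sub

/-- Euler's integral `B(p, q) ₂F₁(r, p; p + q; z)`, which represents the Gauss hypergeometric
function. It is meaningful for `0 < p`, `0 < q` and `z < 1`. -/
noncomputable def eulerIntegral (p q r z : ℝ) : ℝ :=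
  ∫ y in (0:ℝ)..1, y ^ (p - 1) * (1 - y) ^ (q - 1) * (1 - z * y) ^ (-r)

theorem eulerIntegral_exponent_zero {p q : ℝ} (hp : 0 < p) (hq : 0 < q) (z : ℝ) :
    eulerIntegral p q 0 z = ProbabilityTheory.beta p q := by
  simp only [eulerIntegral, neg_zero, Real.rpow_zero, mul_one, integral_beta hp hq]

theorem euler_integrand_comp_mobius (p q r : ℝ) {z y : ℝ} (hz : z < 1)
    (hy : y ∈ Set.Icc (0 : ℝ) 1) :
    ((1 - z) * y / (1 - z * y)) ^ (p - 1) * (1 - (1 - z) * y / (1 - z * y)) ^ (q - 1) *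
        (1 - z / (z - 1) * ((1 - z) * y / (1 - z * y))) ^ (-(p + q - r)) *
        ((1 - z) / (1 - z * y) ^ 2) =
      (1 - z) ^ p * (y ^ (p - 1) * (1 - y) ^ (q - 1) * (1 - z * y) ^ (-r)) := by
  have hs : 0 < 1 - z := sub_pos.mpr hz
  have hd : 0 < 1 - z * y := one_sub_mul_pos hz hy
  have h_one_sub : 1 - (1 - z) * y / (1 - z * y) = (1 - y) / (1 - z * y) := by
    field_simp
    ring
  have h_one_sub_mul : 1 - z / (z - 1) * ((1 - z) * y / (1 - z * y)) = (1 - z * y)⁻¹ := by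
    have : z - 1 ≠ 0 := (sub_neg.mpr hz).ne
    field_simp
    ring
  rw [h_one_sub, h_one_sub_mul]
  set d := 1 - z * y
  have h_scale : (1 - z) ^ (p - 1) * (1 - z) = (1 - z) ^ p := by
    rw [← Real.rpow_add_one hs.ne', sub_add_cancel]
  have h_weight : d ^ (p + q - r) / d ^ (p - 1) / d ^ (q - 1) / d ^ 2 = d ^ (-r) := by
    rw [← Real.rpow_two, ← Real.rpow_sub hd, ← Real.rpow_sub hd, ← Real.rpow_sub hd]
    ring_nf
  rw [Real.div_rpow (mul_nonneg hs.le hy.1) hd.le, Real.mul_rpow hs.le hy.1,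
    Real.div_rpow (sub_nonneg.mpr hy.2) hd.le, Real.inv_rpow hd.le, Real.rpow_neg hd.le (p + q - r),
    inv_inv, ← h_scale, ← h_weight]
  ring

theorem eulerIntegral_pfaff (p q r : ℝ) {z : ℝ} (hz : z < 1) :
    eulerIntegral p q r z = (1 - z) ^ (-p) * eulerIntegral p q (p + q - r) (z / (z - 1)) := by
  have hs : 0 < 1 - z := sub_pos.mpr hz
  have h_comp : eulerIntegral p q (p + q - r) (z / (z - 1)) =
      (1 - z) ^ p * eulerIntegral p q r z := by
    simp only [eulerIntegral]
    rw [← integral_comp_mobius _ hz, ← intervalIntegral.integral_const_mul]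
    refine intervalIntegral.integral_congr fun y hy => ?_
    rw [Set.uIcc_of_le zero_le_one] at hy
    exact euler_integrand_comp_mobius p q r hz hy
  rw [h_comp, ← mul_assoc, ← Real.rpow_add hs, neg_add_cancel, Real.rpow_zero, one_mul]

theorem eulerIntegral_exponent_add {p q z : ℝ} (hp : 0 < p) (hq : 0 < q) (hz : z < 1) :
    eulerIntegral p q (p + q) z = (1 - z) ^ (-p) * ProbabilityTheory.beta p q := by
  rw [eulerIntegral_pfaff p q _ hz, sub_self, eulerIntegral_exponent_zero hp hq]

theorem beta_one_right {p : ℝ} (hp : 0 < p) : ProbabilityTheory.beta p 1 = p⁻¹ := by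
  rw [ProbabilityTheory.beta, Real.Gamma_one, Real.Gamma_add_one hp.ne', mul_one,
    div_mul_cancel_right₀ (Real.Gamma_pos_of_pos hp).ne']

theorem integral_rpow_mul_one_sub_mul_rpow {r t y : ℝ} (hr : 0 < r) (ht : 0 ≤ t)
    (hty : t * y < 1) :
    ∫ s in (0:ℝ)..t, s ^ (r - 1) * (1 - s * y) ^ (-(r + 1)) = t ^ r / r * (1 - t * y) ^ (-r) := by
  have h_scale : ∫ s in (0:ℝ)..t, s ^ (r - 1) * (1 - s * y) ^ (-(r + 1)) =
      t ^ r * eulerIntegral r 1 (r + 1) (t * y) := by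
    have h_rpow : t ^ r = t * t ^ (r - 1) := by
      rw [← Real.rpow_one_add' ht (by linarith), add_sub_cancel]
    have h_comp := intervalIntegral.smul_integral_comp_mul_left (a := 0) (b := 1)
      (fun s => s ^ (r - 1) * (1 - s * y) ^ (-(r + 1))) t
    rw [mul_zero, mul_one, smul_eq_mul] at h_comp
    rw [← h_comp, h_rpow, mul_assoc, eulerIntegral, ← intervalIntegral.integral_const_mul (t ^ _)]
    congr 1
    refine intervalIntegral.integral_congr_Ioo_of_le zero_le_one fun σ hσ => ?_
    simp only [Real.mul_rpow ht hσ.1.le, sub_self, Real.rpow_zero]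
    ring_nf
  rw [h_scale, eulerIntegral_exponent_add hr one_pos hty, beta_one_right hr]
  ring

theorem integral_rpow_mul_eulerIntegral {p q r t : ℝ} (hp : 0 < p) (hq : 0 < q) (hr : 0 < r)
    (ht0 : 0 ≤ t) (ht1 : t < 1) :
    ∫ s in (0:ℝ)..t, s ^ (r - 1) * eulerIntegral p q (r + 1) s =
      t ^ r / r * eulerIntegral p q r t := by
  have h_kernel : ContinuousOn (Function.uncurry fun s y : ℝ => (1 - s * y) ^ (-(r + 1)))
      (Set.uIcc 0 t ×ˢ Set.uIcc 0 1) := by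
    refine ContinuousOn.rpow_const (by fun_prop) fun z hz => Or.inl ?_
    rw [Set.uIcc_of_le ht0, Set.uIcc_of_le zero_le_one] at hz
    exact (one_sub_mul_pos (hz.1.2.trans_lt ht1) hz.2).ne'
  have h_rpow : IntervalIntegrable (fun s : ℝ => s ^ (r - 1)) volume 0 t :=
    intervalIntegral.intervalIntegrable_rpow' (by linarith)
  calc ∫ s in (0:ℝ)..t, s ^ (r - 1) * eulerIntegral p q (r + 1) s
    _ = ∫ s in (0:ℝ)..t, ∫ y in (0:ℝ)..1,
          s ^ (r - 1) * (y ^ (p - 1) * (1 - y) ^ (q - 1)) * (1 - s * y) ^ (-(r + 1)) := by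
      simp only [eulerIntegral, mul_assoc, intervalIntegral.integral_const_mul]
    _ = ∫ y in (0:ℝ)..1, ∫ s in (0:ℝ)..t,
          s ^ (r - 1) * (y ^ (p - 1) * (1 - y) ^ (q - 1)) * (1 - s * y) ^ (-(r + 1)) :=
      intervalIntegral_swap_mul_continuousOn h_rpow (intervalIntegrable_beta hp hq) h_kernel
    _ = ∫ y in (0:ℝ)..1,
          t ^ r / r * (y ^ (p - 1) * (1 - y) ^ (q - 1) * (1 - t * y) ^ (-r)) := by
      refine intervalIntegral.integral_congr_Ioo_of_le zero_le_one fun y hy => ?_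
      have hty : t * y < 1 := sub_pos.mp (one_sub_mul_pos ht1 (Set.Ioo_subset_Icc_self hy))
      simp only [mul_right_comm _ (y ^ (p - 1) * (1 - y) ^ (q - 1)),
        intervalIntegral.integral_mul_const, integral_rpow_mul_one_sub_mul_rpow hr ht0 hty]
      ring
    _ = t ^ r / r * eulerIntegral p q r t := intervalIntegral.integral_const_mul _ _

theorem rpow_mul_eulerIntegral_eq_incomplete_beta {p q t : ℝ} (hp : 0 < p) (hq : 0 < q)
    (hpq : 1 < p + q) (ht0 : 0 ≤ t) (ht1 : t < 1) :
    t ^ (p + q - 1) * eulerIntegral p q (p + q - 1) t =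
      (p + q - 1) * ProbabilityTheory.beta p q *
        ∫ s in (0:ℝ)..t, s ^ (p + q - 2) * (1 - s) ^ (-p) := by
  have hr : 0 < p + q - 1 := sub_pos.mpr hpq
  have h_beta : ∫ s in (0:ℝ)..t, s ^ (p + q - 1 - 1) * eulerIntegral p q (p + q - 1 + 1) s =
      ProbabilityTheory.beta p q * ∫ s in (0:ℝ)..t, s ^ (p + q - 2) * (1 - s) ^ (-p) := by
    rw [← intervalIntegral.integral_const_mul]
    refine intervalIntegral.integral_congr fun s hs => ?_
    rw [Set.uIcc_of_le ht0] at hs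
    rw [sub_add_cancel, eulerIntegral_exponent_add hp hq (hs.2.trans_lt ht1), sub_sub,
      one_add_one_eq_two]
    ring
  rw [mul_assoc, ← h_beta, integral_rpow_mul_eulerIntegral hp hq hr ht0 ht1, ← mul_assoc,
    mul_div_cancel₀ _ hr.ne']

theorem integral_hitting_density_eq_eulerIntegral (p q : ℝ) {x : ℝ} (hx : 1 < x) :
    ∫ u in (-1:ℝ)..1, (1 + u) ^ (q - 1) * (1 - u) ^ (p - 1) * (x - u)⁻¹ =
      2 ^ (p + q - 1) * (x - 1)⁻¹ * eulerIntegral p q 1 (-2 / (x - 1)) := by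
  have h_comp := intervalIntegral.smul_integral_comp_sub_mul (a := 0) (b := 1)
    (fun u => (1 + u) ^ (q - 1) * (1 - u) ^ (p - 1) * (x - u)⁻¹) 2 1
  norm_num only [smul_eq_mul] at h_comp
  rw [← h_comp, eulerIntegral, ← intervalIntegral.integral_const_mul,
    ← intervalIntegral.integral_const_mul]
  refine intervalIntegral.integral_congr_Ioo_of_le zero_le_one fun v hv => ?_
  have hm : 0 < x - 1 := sub_pos.mpr hx
  have h_left : 1 + (1 - 2 * v) = 2 * (1 - v) := by ring
  have h_right : 1 - (1 - 2 * v) = 2 * v := by ring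
  have h_pole : (x - (1 - 2 * v))⁻¹ = (x - 1)⁻¹ * (1 - -2 / (x - 1) * v)⁻¹ := by
    rw [← mul_inv]
    congr 1
    field_simp
    ring
  have h_two : (2:ℝ) ^ (p + q - 1) = 2 * (2 ^ (q - 1) * 2 ^ (p - 1)) := by
    rw [show p + q - 1 = 1 + (q - 1 + (p - 1)) by ring, Real.rpow_add two_pos, Real.rpow_one,
      Real.rpow_add two_pos]
  rw [h_left, h_right, h_pole, h_two, Real.mul_rpow two_pos.le (sub_nonneg.mpr hv.2.le),
    Real.mul_rpow two_pos.le hv.1.le, Real.rpow_neg_one]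
  ring

theorem rpow_mul_integral_hitting_density (p q : ℝ) {x : ℝ} (hx : 1 < x) :
    (x + 1) ^ (1 - q) * (x - 1) ^ (1 - p) *
        ∫ u in (-1:ℝ)..1, (1 + u) ^ (q - 1) * (1 - u) ^ (p - 1) * (x - u)⁻¹ =
      (2 / (x + 1)) ^ (p + q - 1) * eulerIntegral p q (p + q - 1) (2 / (x + 1)) := by
  have hp : 0 < x + 1 := by linarith
  have hm : 0 < x - 1 := sub_pos.mpr hx
  have hz : -2 / (x - 1) < 1 := (div_neg_of_neg_of_pos (by norm_num) hm).trans one_pos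
  have h_one_sub : 1 - -2 / (x - 1) = (x + 1) / (x - 1) := by
    field_simp
    ring
  have h_pfaff : -2 / (x - 1) / (-2 / (x - 1) - 1) = 2 / (x + 1) := by
    rw [← neg_sub 1 (-2 / (x - 1)), h_one_sub]
    field_simp
  have h_plus : (x + 1) ^ (1 - q) * (x + 1) ^ (-p) = ((x + 1) ^ (p + q - 1))⁻¹ := by
    rw [← Real.rpow_add hp, ← Real.rpow_neg hp.le]
    ring_nf
  have h_minus : (x - 1) ^ (1 - p) * (x - 1)⁻¹ / (x - 1) ^ (-p) = 1 := by
    rw [div_eq_one_iff_eq (Real.rpow_pos_of_pos hm _).ne', ← Real.rpow_neg_one, ← Real.rpow_add hm]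
    ring_nf
  rw [integral_hitting_density_eq_eulerIntegral p q hx, eulerIntegral_pfaff p q 1 hz, h_one_sub,
    h_pfaff, Real.div_rpow hp.le hm.le, Real.div_rpow two_pos.le hp.le]
  set E := eulerIntegral p q (p + q - 1) (2 / (x + 1))
  calc (x + 1) ^ (1 - q) * (x - 1) ^ (1 - p) *
        (2 ^ (p + q - 1) * (x - 1)⁻¹ * ((x + 1) ^ (-p) / (x - 1) ^ (-p) * E))
    _ = 2 ^ (p + q - 1) * ((x + 1) ^ (1 - q) * (x + 1) ^ (-p)) *
          ((x - 1) ^ (1 - p) * (x - 1)⁻¹ / (x - 1) ^ (-p)) * E := by ring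
    _ = 2 ^ (p + q - 1) / (x + 1) ^ (p + q - 1) * E := by
      rw [h_plus, h_minus, mul_one, div_eq_mul_inv]

theorem sin_div_pi_mul_beta {a b : ℝ} (hb : b < 1) (hab : a + b < 1) (hb_pole : ∀ n : ℕ, b ≠ -n) :
    Real.sin (Real.pi * b) / Real.pi *
        ((1 - (a + b)) * ProbabilityTheory.beta (1 - b) (1 - a)) =
      Real.Gamma (1 - a) / (Real.Gamma b * Real.Gamma (1 - (a + b))) := by
  have hA : 0 < 1 - (a + b) := sub_pos.mpr hab
  have hΓb := Real.Gamma_ne_zero hb_pole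
  have hΓb' := (Real.Gamma_pos_of_pos (sub_pos.mpr hb)).ne'
  have hΓA := (Real.Gamma_pos_of_pos hA).ne'
  have h_reflection : Real.sin (Real.pi * b) / Real.pi =
      (Real.Gamma b * Real.Gamma (1 - b))⁻¹ := by
    rw [Real.Gamma_mul_Gamma_one_sub, inv_div]
  rw [h_reflection, ProbabilityTheory.beta, show 1 - b + (1 - a) = 1 - (a + b) + 1 by ring,
    Real.Gamma_add_one hA.ne', eq_div_iff (mul_ne_zero hΓb hΓA)]
  field_simp

theorem hitting_probability_integral_identity_general {a b x : ℝ} (ha : a < 1) (hb : b < 1)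
    (hab : a + b < 1) (hb_pole : ∀ n : ℕ, b ≠ -n) (hx : 1 < x) :
    Real.sin (Real.pi * b) / Real.pi * (x + 1) ^ a * (x - 1) ^ b *
        ∫ u in (-1:ℝ)..1, (1 + u) ^ (-a) * (1 - u) ^ (-b) * (x - u)⁻¹ =
      Real.Gamma (1 - a) / (Real.Gamma b * Real.Gamma (1 - (a + b))) *
        ∫ s in (0:ℝ)..(2 / (x + 1)), s ^ (-(a + b)) * (1 - s) ^ (b - 1) := by
  have ht0 : 0 ≤ 2 / (x + 1) := div_nonneg two_pos.le (by linarith)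
  have ht1 : 2 / (x + 1) < 1 := (div_lt_one (by linarith)).mpr (by linarith)
  have h_density := rpow_mul_integral_hitting_density (1 - b) (1 - a) hx
  have h_incomplete := rpow_mul_eulerIntegral_eq_incomplete_beta (sub_pos.mpr hb)
    (sub_pos.mpr ha) (by linarith) ht0 ht1
  rw [h_incomplete, show 1 - b + (1 - a) - 1 = 1 - (a + b) by ring,
    show 1 - b + (1 - a) - 2 = -(a + b) by ring] at h_density
  simp only [sub_sub_cancel, sub_sub_cancel_left, neg_sub] at h_density
  rw [← sin_div_pi_mul_beta hb hab hb_pole, mul_assoc _ ((x + 1) ^ a), mul_assoc, h_density,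
    ← mul_assoc]

theorem hitting_probability_integral_identity
    (α ρ : ℝ) (hα : α ∈ Set.Ioo (0:ℝ) 1) (hρ : ρ ∈ Set.Ioo (0:ℝ) 1)
    (x : ℝ) (hx : 1 < x) :
    Real.sin (Real.pi * α * (1 - ρ)) / Real.pi * (x + 1) ^ (α * ρ) *
        (x - 1) ^ (α * (1 - ρ)) *
      ∫ u in (-1:ℝ)..1,
        (1 + u) ^ (-(α * ρ)) * (1 - u) ^ (-(α * (1 - ρ))) * (x - u)⁻¹ =
    Real.Gamma (1 - α * ρ) / (Real.Gamma (α * (1 - ρ)) * Real.Gamma (1 - α)) *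
      ∫ s in (0:ℝ)..(2 / (x + 1)), s ^ (-α) * (1 - s) ^ (α * (1 - ρ) - 1) := by
  have ha : 0 < α * ρ := mul_pos hα.1 hρ.1
  have hb : 0 < α * (1 - ρ) := mul_pos hα.1 (sub_pos.mpr hρ.2)
  have hab : α * ρ + α * (1 - ρ) = α := by ring
  have h := hitting_probability_integral_identity_general (a := α * ρ) (b := α * (1 - ρ))
    (by linarith [hα.2]) (by linarith [hα.2]) (hab.trans_lt hα.2)
    (fun n => ((neg_nonpos.mpr n.cast_nonneg).trans_lt hb).ne') hx
  rwa [hab, ← mul_assoc Real.pi] at h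
end

section
/- Let α ∈ (1,2), ρ ∈ (1−1/α, 1/α), ρ̂ = 1−ρ, and x > 1. Then ∫_{−1}^{1} (sin(παρ̂)/π) (1+y)^{−αρ} (1−y)^{−αρ̂} · [ (x+1)^{αρ} (x−1)^{αρ̂} (x−y)^{−1} − (α−1) ∫_1^{x} (t−1)^{αρ̂−1} (t+1)^{αρ−1} dt ] dy = 1. -/
open MeasureTheory

/-!
Put `a = αρ`, `b = αρ̂` and `w y = (1 + y) ^ (-a) * (1 - y) ^ (-b)`. For `t > 1` the Möbius map
`s ↦ (t + 1 - (t - 1) s) / (t + 1 + (t - 1) s)` from `(0, ∞)` onto `(-1, 1)` pulls `w` back to a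
multiple of `s ^ (-b) * (t + 1 + (t - 1) s) ^ (a + b - 2)`. Taking `t = x`, the first term of the
density has, up to the factor `sin (π b) / π`, total mass
`2 ^ (1 - a - b) * ∫ s ^ (-b) / (1 + s) * (x + 1 + (x - 1) s) ^ (a + b - 1)` over `s > 0`, which at
`x = 1` would be the Mellin integral `∫ s ^ (-b) / (1 + s) = π / sin (π b)`.
The increment of `(t + 1 + (t - 1) s) ^ (a + b - 1)` from `t = 1` to `t = x` is the integral of its
`t`-derivative, and exchanging the integrals in `t` and `s` identifies its contribution with the
second term of the density.
-/

open Set Real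

section Moebius

/-- The Möbius map sending `0, p / q, ∞` to `1, 0, -1`, used to substitute a variable in `(0, ∞)`
for one in `(-1, 1)`. -/
noncomputable def moebius (p q s : ℝ) : ℝ := (p - q * s) / (p + q * s)

variable {p q s : ℝ}

lemma one_add_moebius (h : p + q * s ≠ 0) : 1 + moebius p q s = 2 * p / (p + q * s) := by
  rw [moebius, one_add_div h]
  ring

lemma one_sub_moebius (h : p + q * s ≠ 0) : 1 - moebius p q s = 2 * (q * s) / (p + q * s) := by
  rw [moebius, one_sub_div h]
  ring

lemma hasDerivAt_moebius (h : p + q * s ≠ 0) :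
    HasDerivAt (moebius p q) (-(2 * p * q / (p + q * s) ^ 2)) s := by
  have hqs : HasDerivAt (fun s => q * s) q s := by simpa using (hasDerivAt_id s).const_mul q
  convert! (hqs.const_sub p).div (hqs.const_add p) h using 1
  ring

lemma bijOn_moebius (hp : 0 < p) (hq : 0 < q) : BijOn (moebius p q) (Ioi 0) (Ioo (-1) 1) := by
  have hinv : InvOn (fun y => p * (1 - y) / (q * (1 + y))) (moebius p q) (Ioi 0) (Ioo (-1) 1) := by
    constructor
    · intro s (hs : 0 < s)
      have hD : p + q * s ≠ 0 := by positivity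
      simp only [one_add_moebius hD, one_sub_moebius hD]
      field_simp
    · intro y hy
      have hy' : 0 < 1 + y := by linarith [hy.1]
      simp only [moebius]
      field_simp
      ring
  refine hinv.bijOn (fun s (hs : 0 < s) => ?_) (fun y hy => ?_)
  · have hD : 0 < p + q * s := by positivity
    have h_add : 0 < 1 + moebius p q s := by rw [one_add_moebius hD.ne']; positivity
    have h_sub : 0 < 1 - moebius p q s := by rw [one_sub_moebius hD.ne']; positivity
    constructor <;> linarith
  · have h_add : 0 < 1 + y := by linarith [hy.1]
    have h_sub : 0 < 1 - y := by linarith [hy.2]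
    exact mem_Ioi.2 (by positivity)

variable {E : Type*} [NormedAddCommGroup E] [NormedSpace ℝ E]

lemma eqOn_abs_deriv_moebius_smul (hp : 0 < p) (hq : 0 < q) (f : ℝ → E) :
    EqOn (fun s => |-(2 * p * q / (p + q * s) ^ 2)| • f (moebius p q s))
      (fun s => (2 * p * q / (p + q * s) ^ 2) • f (moebius p q s)) (Ioi 0) := by
  intro s _
  simp only [abs_neg]
  rw [abs_of_nonneg (by positivity)]

lemma hasDerivWithinAt_moebius (hp : 0 < p) (hq : 0 < q) :
    ∀ s ∈ Ioi (0 : ℝ),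
      HasDerivWithinAt (moebius p q) (-(2 * p * q / (p + q * s) ^ 2)) (Ioi 0) s :=
  fun s (hs : 0 < s) => (hasDerivAt_moebius (by positivity)).hasDerivWithinAt

lemma integrableOn_Ioo_iff_moebius (hp : 0 < p) (hq : 0 < q) (f : ℝ → E) :
    IntegrableOn f (Ioo (-1) 1) ↔
      IntegrableOn (fun s => (2 * p * q / (p + q * s) ^ 2) • f (moebius p q s)) (Ioi 0) := by
  rw [← (bijOn_moebius hp hq).image_eq, integrableOn_image_iff_integrableOn_abs_deriv_smul
    measurableSet_Ioi (hasDerivWithinAt_moebius hp hq) (bijOn_moebius hp hq).injOn]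
  exact integrableOn_congr_fun (eqOn_abs_deriv_moebius_smul hp hq f) measurableSet_Ioi

lemma integral_Ioo_eq_integral_moebius (hp : 0 < p) (hq : 0 < q) (f : ℝ → E) :
    ∫ y in Ioo (-1) 1, f y =
      ∫ s in Ioi 0, (2 * p * q / (p + q * s) ^ 2) • f (moebius p q s) := by
  rw [← (bijOn_moebius hp hq).image_eq, integral_image_eq_integral_abs_deriv_smul
    measurableSet_Ioi (hasDerivWithinAt_moebius hp hq) (bijOn_moebius hp hq).injOn]
  exact setIntegral_congr_fun measurableSet_Ioi (eqOn_abs_deriv_moebius_smul hp hq f)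

end Moebius

section JacobiWeight

/-- The Jacobi weight on `(-1, 1)`, with the exponents negated so that `a` and `b` are the orders
of the singularities at `-1` and `1`. -/
noncomputable def jacobiWeight (a b y : ℝ) : ℝ := (1 + y) ^ (-a) * (1 - y) ^ (-b)

variable {a b p q : ℝ}

lemma jacobiWeight_moebius (hp : 0 < p) (hq : 0 < q) {s : ℝ} (hs : 0 < s) :
    2 * p * q / (p + q * s) ^ 2 * jacobiWeight a b (moebius p q s) =
      2 ^ (1 - a - b) * p ^ (1 - a) * q ^ (1 - b) * (s ^ (-b) * (p + q * s) ^ (a + b - 2)) := by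
  have hD : 0 < p + q * s := by positivity
  rw [jacobiWeight, one_add_moebius hD.ne', one_sub_moebius hD.ne', div_rpow (by positivity) hD.le,
    div_rpow (by positivity) hD.le, mul_rpow two_pos.le hp.le, mul_rpow two_pos.le (by positivity),
    mul_rpow hq.le hs.le, rpow_sub two_pos, rpow_sub two_pos, rpow_sub hp, rpow_sub hq,
    rpow_sub hD, rpow_add hD]
  simp only [rpow_one, rpow_two, rpow_neg two_pos.le, rpow_neg hp.le, rpow_neg hq.le,
    rpow_neg hD.le]
  field_simp

lemma eqOn_jacobiWeight_mul_moebius (hp : 0 < p) (hq : 0 < q) (g : ℝ → ℝ) :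
    EqOn
      (fun s => (2 * p * q / (p + q * s) ^ 2) •
        (jacobiWeight a b (moebius p q s) * g (moebius p q s)))
      (fun s => 2 ^ (1 - a - b) * p ^ (1 - a) * q ^ (1 - b) *
        (s ^ (-b) * (p + q * s) ^ (a + b - 2) * g (moebius p q s))) (Ioi 0) := by
  intro s hs
  simp only [smul_eq_mul]
  rw [← mul_assoc, jacobiWeight_moebius hp hq hs]
  ring

lemma integrableOn_jacobiWeight_mul_iff (hp : 0 < p) (hq : 0 < q) (g : ℝ → ℝ) :
    IntegrableOn (fun y => jacobiWeight a b y * g y) (Ioo (-1) 1) ↔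
      IntegrableOn (fun s => s ^ (-b) * (p + q * s) ^ (a + b - 2) * g (moebius p q s))
        (Ioi 0) := by
  rw [integrableOn_Ioo_iff_moebius hp hq,
    integrableOn_congr_fun (eqOn_jacobiWeight_mul_moebius hp hq g) measurableSet_Ioi]
  exact integrable_const_mul_iff (IsUnit.mk0 _ (by positivity)) _

lemma integral_jacobiWeight_mul (hp : 0 < p) (hq : 0 < q) (g : ℝ → ℝ) :
    ∫ y in Ioo (-1) 1, jacobiWeight a b y * g y =
      2 ^ (1 - a - b) * p ^ (1 - a) * q ^ (1 - b) *
        ∫ s in Ioi 0, s ^ (-b) * (p + q * s) ^ (a + b - 2) * g (moebius p q s) := by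
  rw [integral_Ioo_eq_integral_moebius hp hq, ← integral_const_mul]
  exact setIntegral_congr_fun measurableSet_Ioi (eqOn_jacobiWeight_mul_moebius hp hq g)

lemma integrableOn_jacobiWeight (ha : a < 1) (hb : b < 1) :
    IntegrableOn (jacobiWeight a b) (Ioo (-1) 1) := by
  rw [← intervalIntegrable_iff_integrableOn_Ioo_of_le (by norm_num)]
  refine IntervalIntegrable.trans (b := 0) ?_ ?_
  · have h : IntervalIntegrable (fun y : ℝ => (1 + y) ^ (-a)) volume (-1) 0 := by
      simpa using (intervalIntegral.intervalIntegrable_rpow' (a := 0) (b := 1) (r := -a)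
        (by linarith)).comp_add_left 1
    refine h.mul_continuousOn (ContinuousOn.rpow_const (by fun_prop) fun y hy => Or.inl ?_)
    rw [uIcc_of_le (by norm_num)] at hy
    linarith [hy.2]
  · have h : IntervalIntegrable (fun y : ℝ => (1 - y) ^ (-b)) volume 0 1 := by
      simpa using (intervalIntegral.intervalIntegrable_rpow' (a := 1) (b := 0) (r := -b)
        (by linarith)).comp_sub_left 1
    refine h.continuousOn_mul (ContinuousOn.rpow_const (by fun_prop) fun y hy => Or.inl ?_)
    rw [uIcc_of_le zero_le_one] at hy
    linarith [hy.1]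

lemma integral_rpow_mul_one_sub_rpow {u v : ℝ} (hu : 0 < u) (hv : 0 < v) :
    ∫ x in (0 : ℝ)..1, x ^ (u - 1) * (1 - x) ^ (v - 1) = ProbabilityTheory.beta u v := by
  rw [ProbabilityTheory.beta_eq_betaIntegralReal u v hu hv, Complex.betaIntegral,
    ← Complex.ofReal_re (∫ x in (0 : ℝ)..1, _), ← intervalIntegral.integral_ofReal]
  congr 1
  refine intervalIntegral.integral_congr fun x hx => ?_
  rw [uIcc_of_le zero_le_one] at hx
  push_cast [Complex.ofReal_cpow hx.1, Complex.ofReal_cpow (sub_nonneg.2 hx.2)]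
  rfl

lemma integral_jacobiWeight (ha : a < 1) (hb : b < 1) :
    ∫ y in Ioo (-1) 1, jacobiWeight a b y =
      2 ^ (1 - a - b) * ProbabilityTheory.beta (1 - a) (1 - b) := by
  have h_affine : 2 * ∫ u in (0 : ℝ)..1, jacobiWeight a b (2 * u - 1) =
      ∫ y in (-1)..1, jacobiWeight a b y := by
    rw [intervalIntegral.mul_integral_comp_mul_sub]
    norm_num
  rw [← integral_Ioc_eq_integral_Ioo, ← intervalIntegral.integral_of_le (by norm_num), ← h_affine,
    ← integral_rpow_mul_one_sub_rpow (by linarith) (by linarith),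
    ← intervalIntegral.integral_const_mul, ← intervalIntegral.integral_const_mul]
  refine intervalIntegral.integral_congr fun u hu => ?_
  rw [uIcc_of_le zero_le_one] at hu
  have h_one_sub : 1 - (2 * u - 1) = 2 * (1 - u) := by ring
  simp only [jacobiWeight, add_sub_cancel, h_one_sub, sub_sub_cancel_left]
  rw [mul_rpow two_pos.le hu.1, mul_rpow two_pos.le (sub_nonneg.2 hu.2), rpow_sub two_pos,
    rpow_sub two_pos, rpow_one, rpow_neg two_pos.le, rpow_neg two_pos.le]
  ring

end JacobiWeight

section HalfLineIntegrals

variable {a b x : ℝ}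

lemma integrableOn_rpow_neg_div_one_add (hb0 : 0 < b) (hb1 : b < 1) :
    IntegrableOn (fun s : ℝ => s ^ (-b) / (1 + s)) (Ioi 0) := by
  have h := (integrableOn_jacobiWeight_mul_iff (a := 1 - b) (b := b) one_pos one_pos 1).1
    (by simpa using integrableOn_jacobiWeight (by linarith) hb1)
  refine h.congr_fun (fun s _ => ?_) measurableSet_Ioi
  norm_num [rpow_neg_one, div_eq_mul_inv]

lemma integral_rpow_neg_div_one_add (hb0 : 0 < b) (hb1 : b < 1) :
    ∫ s in Ioi (0 : ℝ), s ^ (-b) / (1 + s) = π / sin (π * b) := by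
  have h := integral_jacobiWeight_mul (a := 1 - b) (b := b) one_pos one_pos 1
  have h_exp : 1 - b + b - 2 = -1 := by ring
  simp only [Pi.one_apply, mul_one, integral_jacobiWeight (sub_lt_self 1 hb0) hb1, h_exp] at h
  rw [← Gamma_mul_Gamma_one_sub]
  simpa [ProbabilityTheory.beta, rpow_neg_one, div_eq_mul_inv] using h.symm

lemma integrableOn_rpow_neg_mul_add_mul_rpow (ha : a < 1) (hb : b < 1) {p q : ℝ} (hp : 0 < p)
    (hq : 0 < q) : IntegrableOn (fun s : ℝ => s ^ (-b) * (p + q * s) ^ (a + b - 2)) (Ioi 0) := by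
  simpa using (integrableOn_jacobiWeight_mul_iff hp hq 1).1
    (by simpa using integrableOn_jacobiWeight ha hb)

lemma integral_rpow_neg_mul_add_mul_rpow (ha : a < 1) (hb : b < 1) {p q : ℝ} (hp : 0 < p)
    (hq : 0 < q) :
    ∫ s in Ioi (0 : ℝ), s ^ (-b) * (p + q * s) ^ (a + b - 2) =
      ProbabilityTheory.beta (1 - a) (1 - b) * (q ^ (b - 1) * p ^ (a - 1)) := by
  have h := integral_jacobiWeight_mul (a := a) (b := b) hp hq 1
  simp only [Pi.one_apply, mul_one, integral_jacobiWeight ha hb] at h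
  have h_two : (0 : ℝ) < 2 ^ (1 - a - b) := by positivity
  rw [← neg_sub 1 b, ← neg_sub 1 a, rpow_neg hp.le, rpow_neg hq.le]
  field_simp
  refine mul_left_cancel₀ h_two.ne' ?_
  linear_combination -h

end HalfLineIntegrals

section Resolvent

variable {a b x : ℝ}

lemma inv_sub_moebius (hx : 1 < x) {s : ℝ} (hs : 0 < s) :
    (x - moebius (x + 1) (x - 1) s)⁻¹ =
      (x + 1 + (x - 1) * s) / ((x + 1) * (x - 1) * (1 + s)) := by
  have hD : 0 < x + 1 + (x - 1) * s := by linarith [mul_pos (sub_pos.2 hx) hs]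
  have h_sub : x - moebius (x + 1) (x - 1) s =
      (x + 1) * (x - 1) * (1 + s) / (x + 1 + (x - 1) * s) := by
    rw [moebius, sub_div' hD.ne']
    ring
  rw [h_sub, inv_div]

lemma integrableOn_jacobiWeight_mul_inv_sub (ha : a < 1) (hb : b < 1) (hx : 1 < x) :
    IntegrableOn (fun y => jacobiWeight a b y * (x - y)⁻¹) (Ioo (-1) 1) := by
  have h := integrableOn_jacobiWeight ha hb
  rw [← intervalIntegrable_iff_integrableOn_Ioo_of_le (by norm_num)] at h ⊢
  refine h.mul_continuousOn (ContinuousOn.inv₀ (by fun_prop) fun y hy => ?_)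
  rw [uIcc_of_le (by norm_num)] at hy
  linarith [hy.2]

lemma eqOn_rpow_mul_inv_sub_moebius (hx : 1 < x) :
    EqOn
      (fun s => s ^ (-b) * (x + 1 + (x - 1) * s) ^ (a + b - 2) *
        (x - moebius (x + 1) (x - 1) s)⁻¹)
      (fun s => ((x + 1) * (x - 1))⁻¹ *
        (s ^ (-b) / (1 + s) * (x + 1 + (x - 1) * s) ^ (a + b - 1))) (Ioi 0) := by
  intro s (hs : 0 < s)
  have hq : 0 < x - 1 := by linarith
  have hD : 0 < x + 1 + (x - 1) * s := by positivity
  have h_exp : a + b - 1 = a + b - 2 + 1 := by ring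
  simp only [inv_sub_moebius hx hs]
  rw [h_exp, rpow_add_one hD.ne']
  field_simp

lemma integrableOn_rpow_neg_div_one_add_mul_rpow (ha : a < 1) (hb : b < 1) (hx : 1 < x) :
    IntegrableOn (fun s => s ^ (-b) / (1 + s) * (x + 1 + (x - 1) * s) ^ (a + b - 1))
      (Ioi 0) := by
  have hp : 0 < x + 1 := by linarith
  have hq : 0 < x - 1 := by linarith
  have h := (integrableOn_jacobiWeight_mul_iff hp hq fun y => (x - y)⁻¹).1
    (integrableOn_jacobiWeight_mul_inv_sub ha hb hx)
  rw [integrableOn_congr_fun (eqOn_rpow_mul_inv_sub_moebius hx) measurableSet_Ioi] at h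
  exact (integrable_const_mul_iff (IsUnit.mk0 _ (by positivity)) _).1 h

lemma rpow_mul_integral_jacobiWeight_mul_inv_sub (hx : 1 < x) :
    (x + 1) ^ a * (x - 1) ^ b * ∫ y in Ioo (-1) 1, jacobiWeight a b y * (x - y)⁻¹ =
      2 ^ (1 - a - b) *
        ∫ s in Ioi 0, s ^ (-b) / (1 + s) * (x + 1 + (x - 1) * s) ^ (a + b - 1) := by
  have hp : 0 < x + 1 := by linarith
  have hq : 0 < x - 1 := by linarith
  rw [integral_jacobiWeight_mul hp hq fun y => (x - y)⁻¹,
    setIntegral_congr_fun measurableSet_Ioi (eqOn_rpow_mul_inv_sub_moebius hx),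
    integral_const_mul, rpow_sub hp 1, rpow_sub hq 1, rpow_one, rpow_one]
  field_simp

end Resolvent

section Increment

variable {a b x : ℝ}

lemma mul_integral_add_mul_rpow (c : ℝ) (hx : 1 ≤ x) {s : ℝ} (hs : 0 ≤ s) :
    c * ∫ t in (1 : ℝ)..x, (t + 1 + (t - 1) * s) ^ (c - 1) =
      ((x + 1 + (x - 1) * s) ^ c - 2 ^ c) / (1 + s) := by
  have h_pos : ∀ t ∈ uIcc 1 x, 0 < t + 1 + (t - 1) * s := fun t ht => by
    rw [uIcc_of_le hx] at ht
    linarith [ht.1, mul_nonneg (sub_nonneg.2 ht.1) hs]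
  have h_deriv : ∀ t ∈ uIcc 1 x, HasDerivAt (fun t => (t + 1 + (t - 1) * s) ^ c)
      ((1 + s) * c * (t + 1 + (t - 1) * s) ^ (c - 1)) t := fun t ht => by
    have h_lin := ((hasDerivAt_id t).add_const 1).add
      (((hasDerivAt_id t).sub_const 1).mul_const s)
    simpa using h_lin.rpow_const (p := c) (Or.inl (h_pos t ht).ne')
  have h_cont : ContinuousOn (fun t => (1 + s) * c * (t + 1 + (t - 1) * s) ^ (c - 1))
      (uIcc 1 x) :=
    continuousOn_const.mul
      (ContinuousOn.rpow_const (by fun_prop) fun t ht => Or.inl (h_pos t ht).ne')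
  have h_ftc := intervalIntegral.integral_eq_sub_of_hasDerivAt h_deriv h_cont.intervalIntegrable
  rw [intervalIntegral.integral_const_mul] at h_ftc
  simp only [sub_self, zero_mul, add_zero, one_add_one_eq_two] at h_ftc
  rw [eq_div_iff (by positivity)]
  linear_combination h_ftc

lemma intervalIntegrable_sub_one_rpow_mul_add_one_rpow (hb : 0 < b) (hx : 1 ≤ x) :
    IntervalIntegrable (fun t => (t - 1) ^ (b - 1) * (t + 1) ^ (a - 1)) volume 1 x := by
  have h : IntervalIntegrable (fun t : ℝ => (t - 1) ^ (b - 1)) volume 1 x := by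
    simpa using (intervalIntegral.intervalIntegrable_rpow' (a := 0) (b := x - 1) (r := b - 1)
      (by linarith)).comp_sub_right 1
  refine h.mul_continuousOn (ContinuousOn.rpow_const (by fun_prop) fun t ht => Or.inl ?_)
  rw [uIcc_of_le hx] at ht
  linarith [ht.1]

lemma integrable_uncurry_rpow_neg_mul_rpow (ha : a < 1) (hb0 : 0 < b) (hb1 : b < 1)
    (hx : 1 ≤ x) :
    Integrable (Function.uncurry fun t s : ℝ => s ^ (-b) * (t + 1 + (t - 1) * s) ^ (a + b - 2))
      ((volume.restrict (Ioc 1 x)).prod (volume.restrict (Ioi 0))) := by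
  rw [integrable_prod_iff (by
    refine Measurable.aestronglyMeasurable ?_
    simp only [Function.uncurry_def]
    fun_prop)]
  constructor
  · filter_upwards [ae_restrict_mem measurableSet_Ioc] with t ht
    have hp : 0 < t + 1 := by linarith [ht.1]
    have hq : 0 < t - 1 := by linarith [ht.1]
    exact integrableOn_rpow_neg_mul_add_mul_rpow ha hb1 hp hq
  · have h := (intervalIntegrable_sub_one_rpow_mul_add_one_rpow (a := a) hb0 hx).const_mul
      (ProbabilityTheory.beta (1 - a) (1 - b))
    rw [intervalIntegrable_iff_integrableOn_Ioc_of_le hx] at h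
    refine h.congr ?_
    filter_upwards [ae_restrict_mem measurableSet_Ioc] with t ht
    have hp : 0 < t + 1 := by linarith [ht.1]
    have hq : 0 < t - 1 := by linarith [ht.1]
    rw [← integral_rpow_neg_mul_add_mul_rpow ha hb1 hp hq]
    refine setIntegral_congr_fun measurableSet_Ioi fun s (hs : 0 < s) => ?_
    exact (norm_of_nonneg (by positivity)).symm

lemma mul_beta_mul_integral_eq (ha : a < 1) (hb0 : 0 < b) (hb1 : b < 1) (hx : 1 ≤ x) :
    (a + b - 1) * (ProbabilityTheory.beta (1 - a) (1 - b) *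
        ∫ t in (1 : ℝ)..x, (t - 1) ^ (b - 1) * (t + 1) ^ (a - 1)) =
      ∫ s in Ioi 0, s ^ (-b) / (1 + s) *
        ((x + 1 + (x - 1) * s) ^ (a + b - 1) - 2 ^ (a + b - 1)) := by
  calc
    _ = (a + b - 1) * ∫ t in Ioc 1 x, ∫ s in Ioi 0,
          s ^ (-b) * (t + 1 + (t - 1) * s) ^ (a + b - 2) := by
      rw [intervalIntegral.integral_of_le hx, ← integral_const_mul]
      congr 1
      refine setIntegral_congr_fun measurableSet_Ioc fun t ht => ?_
      exact (integral_rpow_neg_mul_add_mul_rpow ha hb1 (by linarith [ht.1])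
        (by linarith [ht.1])).symm
    _ = ∫ s in Ioi 0, (a + b - 1) * ∫ t in Ioc 1 x,
          s ^ (-b) * (t + 1 + (t - 1) * s) ^ (a + b - 2) := by
      rw [integral_integral_swap (integrable_uncurry_rpow_neg_mul_rpow ha hb0 hb1 hx),
        integral_const_mul]
    _ = _ := by
      refine setIntegral_congr_fun measurableSet_Ioi fun s (hs : 0 < s) => ?_
      have h_ftc := mul_integral_add_mul_rpow (a + b - 1) hx hs.le
      rw [sub_sub, one_add_one_eq_two, intervalIntegral.integral_of_le hx] at h_ftc
      simp only [integral_const_mul]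
      linear_combination s ^ (-b) * h_ftc

end Increment

lemma integral_jacobiWeight_mul_sub {a b x : ℝ} (ha : a < 1) (hb0 : 0 < b) (hb1 : b < 1)
    (hx : 1 < x) :
    ∫ y in Ioo (-1) 1, jacobiWeight a b y *
        ((x + 1) ^ a * (x - 1) ^ b * (x - y)⁻¹ -
          (a + b - 1) * ∫ t in (1 : ℝ)..x, (t - 1) ^ (b - 1) * (t + 1) ^ (a - 1)) =
      π / sin (π * b) := by
  set K := ∫ t in (1 : ℝ)..x, (t - 1) ^ (b - 1) * (t + 1) ^ (a - 1)
  have h_split : ∫ y in Ioo (-1) 1, jacobiWeight a b y *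
        ((x + 1) ^ a * (x - 1) ^ b * (x - y)⁻¹ - (a + b - 1) * K) =
      (x + 1) ^ a * (x - 1) ^ b * (∫ y in Ioo (-1) 1, jacobiWeight a b y * (x - y)⁻¹) -
        (a + b - 1) * K * ∫ y in Ioo (-1) 1, jacobiWeight a b y := by
    rw [← integral_const_mul, ← integral_const_mul, ← integral_sub
      ((integrableOn_jacobiWeight_mul_inv_sub ha hb1 hx).const_mul _)
      ((integrableOn_jacobiWeight ha hb1).const_mul _)]
    congr 1 with y
    ring
  have h_increment : (a + b - 1) * (ProbabilityTheory.beta (1 - a) (1 - b) * K) =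
      (∫ s in Ioi 0, s ^ (-b) / (1 + s) * (x + 1 + (x - 1) * s) ^ (a + b - 1)) -
        π / sin (π * b) * 2 ^ (a + b - 1) := by
    rw [mul_beta_mul_integral_eq ha hb0 hb1 hx.le, ← integral_rpow_neg_div_one_add hb0 hb1,
      ← integral_mul_const, ← integral_sub (integrableOn_rpow_neg_div_one_add_mul_rpow ha hb1 hx)
      ((integrableOn_rpow_neg_div_one_add hb0 hb1).mul_const _)]
    simp only [mul_sub]
  have h_two : (2 : ℝ) ^ (1 - a - b) * 2 ^ (a + b - 1) = 1 := by
    rw [← rpow_add two_pos, sub_sub, sub_add_sub_cancel, sub_self, rpow_zero]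
  rw [h_split, rpow_mul_integral_jacobiWeight_mul_inv_sub hx, integral_jacobiWeight ha hb1]
  linear_combination π / sin (π * b) * h_two - 2 ^ (1 - a - b) * h_increment

theorem hitting_density_integrates_to_one_general
    (α ρ : ℝ) (ha : α * ρ < 1) (hb : α * (1 - ρ) ∈ Ioo 0 1) (x : ℝ) (hx : 1 < x) :
    ∫ y in (-1 : ℝ)..1,
      sin (π * α * (1 - ρ)) / π * (1 + y) ^ (-(α * ρ)) *
        (1 - y) ^ (-(α * (1 - ρ))) *
        ((x + 1) ^ (α * ρ) * (x - 1) ^ (α * (1 - ρ)) * (x - y)⁻¹ -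
          (α - 1) *
            ∫ t in (1 : ℝ)..x, (t - 1) ^ (α * (1 - ρ) - 1) * (t + 1) ^ (α * ρ - 1)) = 1 := by
  have h_mass := integral_jacobiWeight_mul_sub ha hb.1 hb.2 hx
  have h_sum : α * ρ + α * (1 - ρ) = α := by ring
  have h_sin : 0 < sin (π * (α * (1 - ρ))) :=
    sin_pos_of_pos_of_lt_pi (mul_pos pi_pos hb.1) (mul_lt_of_lt_one_right pi_pos hb.2)
  simp only [h_sum, jacobiWeight] at h_mass
  simp only [mul_assoc (sin _ / π), intervalIntegral.integral_const_mul]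
  rw [intervalIntegral.integral_of_le (by norm_num), integral_Ioc_eq_integral_Ioo, h_mass,
    mul_assoc π, div_mul_div_cancel₀ pi_ne_zero, div_self h_sin.ne']

theorem hitting_density_integrates_to_one
    (α ρ : ℝ) (hα : α ∈ Set.Ioo (1:ℝ) 2) (hρ : ρ ∈ Set.Ioo (1 - 1/α) (1/α))
    (x : ℝ) (hx : 1 < x) :
    ∫ y in (-1:ℝ)..1,
      Real.sin (Real.pi * α * (1 - ρ)) / Real.pi * (1 + y) ^ (-(α * ρ)) *
        (1 - y) ^ (-(α * (1 - ρ))) *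
        ((x + 1) ^ (α * ρ) * (x - 1) ^ (α * (1 - ρ)) * (x - y)⁻¹ -
          (α - 1) *
            ∫ t in (1:ℝ)..x, (t - 1) ^ (α * (1 - ρ) - 1) * (t + 1) ^ (α * ρ - 1)) = 1 := by
  have hα0 : 0 < α := one_pos.trans hα.1
  exact hitting_density_integrates_to_one_general α ρ ((lt_div_iff₀' hα0).1 hρ.2)
    ⟨mul_pos hα0 (sub_pos.2 (hρ.2.trans ((div_lt_one hα0).2 hα.1))),
      (lt_div_iff₀' hα0).1 (sub_lt_comm.1 hρ.1)⟩ x hx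
end

section
/- Let α ∈ (1,2), ρ ∈ (1−1/α, 1/α), ρ̂ = 1−ρ, and set κ̂(λ) = λ·Γ(1−αρ+λ)/Γ(2−α+λ) for λ > 0. For a, w > 0 define F(a,w) = (sin(παρ̂)/π)·e^{−(1−αρ)w}(1−e^{−w})^{−αρ̂}·[ e^{(α−1)a}(1−e^{−a})^{αρ̂} e^{−w}(e^{a}−e^{−w})^{−1} + (1−αρ)·∫_0^{1−e^{−a}} t^{αρ̂−1}(1−t)^{1−α} dt ]. Then for all q, β > 0 with q ≠ β, ∫_0^∞ ∫_0^∞ e^{−qa−βw} F(a,w) dw da = (κ̂(q)−κ̂(β)) / ((q−β)·κ̂(q)). -/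
open MeasureTheory

/-- The descending ladder Laplace exponent `κ̂(λ) = λ Γ(1-αρ+λ)/Γ(2-α+λ)`. -/
noncomputable def kappaHat (α ρ lam : ℝ) : ℝ :=
  lam * Real.Gamma (1 - α * ρ + lam) / Real.Gamma (2 - α + lam)

/-- The density in `w` of the undershoot at first passage below `-a`. -/
noncomputable def undershootDensity (α ρ a w : ℝ) : ℝ :=
  Real.sin (Real.pi * α * (1 - ρ)) / Real.pi * Real.exp (-(1 - α * ρ) * w) *
    (1 - Real.exp (-w)) ^ (-(α * (1 - ρ))) *
    (Real.exp ((α - 1) * a) * (1 - Real.exp (-a)) ^ (α * (1 - ρ)) * Real.exp (-w) *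
        (Real.exp a - Real.exp (-w))⁻¹ +
      (1 - α * ρ) *
        ∫ t in (0:ℝ)..(1 - Real.exp (-a)), t ^ (α * (1 - ρ) - 1) * (1 - t) ^ (1 - α))

/-!
Write `b = αρ̂`. Expanding `1 / (1 - e^{-(a+w)})` as a geometric series turns the double Laplace
transform of the first summand of the density into `∑ₙ B(b + 1, x + n) B(1 - b, b + y + n)` with
`x = 2 - α + q` and `y = 2 - α + β`. By the functional equation of `Γ` the `n`-th term is
proportional to the increment of `B(b, x + n) / B(b, y + n)`, a ratio tending to `1`, so the series
telescopes. The second summand is a product of a function of `a` and one of `w`, and its factor in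
`a` is a primitive, whose transform is that of the integrand divided by `q`. The reflection formula
removes the factor `sin(πb) / π`, and `κ̂(λ)` is a constant times
`λ / ((1 - αρ + λ) B(b, 2 - α + λ))`.
-/

open Filter ProbabilityTheory Real Set Topology

section Beta

theorem beta_add_one_left {u v : ℝ} (hu : u ≠ 0) (huv : u + v ≠ 0) :
    beta (u + 1) v = u / (u + v) * beta u v := by
  rw [beta, beta, Gamma_add_one hu, add_right_comm, Gamma_add_one huv, mul_assoc,
    mul_div_mul_comm]

theorem beta_add_one_right {u v : ℝ} (hv : v ≠ 0) (huv : u + v ≠ 0) :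
    beta u (v + 1) = v / (u + v) * beta u v := by
  rw [beta, beta, Gamma_add_one hv, ← add_assoc, Gamma_add_one huv, mul_left_comm,
    mul_div_mul_comm]

theorem beta_mul_beta_add_left {u v w : ℝ} (huv : 0 < u + v) (hvw : 0 < v + w) :
    beta u v * beta (u + v) w = beta v w * beta u (v + w) := by
  have := (Gamma_pos_of_pos huv).ne'
  have := (Gamma_pos_of_pos hvw).ne'
  simp only [beta, add_assoc]
  field_simp

theorem beta_one_sub {b s : ℝ} (hb : 0 < b) (hs : 0 < s) (hbs : 0 < 1 - b + s) :
    beta (1 - b) s = Gamma b * Gamma (1 - b) / (s * beta b (1 - b + s)) := by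
  have := (Gamma_pos_of_pos hb).ne'
  have := (Gamma_pos_of_pos hs).ne'
  have := (Gamma_pos_of_pos hbs).ne'
  rw [beta, beta, show b + (1 - b + s) = s + 1 by ring, Gamma_add_one hs.ne']
  field_simp

theorem integral_Ioo_rpow_mul_one_sub_rpow {u v : ℝ} (hu : 0 < u) (hv : 0 < v) :
    ∫ t in Ioo (0 : ℝ) 1, t ^ (u - 1) * (1 - t) ^ (v - 1) = beta u v := by
  have hcast : ∀ t ∈ Ioo (0 : ℝ) 1, (t : ℂ) ^ ((u : ℂ) - 1) * (1 - (t : ℂ)) ^ ((v : ℂ) - 1) =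
      ((t ^ (u - 1) * (1 - t) ^ (v - 1) : ℝ) : ℂ) := fun t ht => by
    rw [Complex.ofReal_mul, Complex.ofReal_cpow ht.1.le, Complex.ofReal_cpow (sub_nonneg.2 ht.2.le)]
    push_cast
    rfl
  rw [beta_eq_betaIntegralReal u v hu hv, Complex.betaIntegral,
    intervalIntegral.integral_of_le zero_le_one, integral_Ioc_eq_integral_Ioo,
    setIntegral_congr_fun measurableSet_Ioo hcast, integral_complex_ofReal, Complex.ofReal_re]

theorem tendsto_rpow_mul_beta_nat_add_one {x : ℝ} (hx : 0 < x) :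
    Tendsto (fun n : ℕ => (n : ℝ) ^ x * beta x (n + 1)) atTop (𝓝 (Gamma x)) := by
  refine ((Complex.continuous_re.tendsto _).comp (Complex.GammaSeq_tendsto_Gamma x)).congr
    fun n => ?_
  have hcast : (n : ℂ) ^ (x : ℂ) = ((n : ℝ) ^ x : ℝ) := by
    rw [Complex.ofReal_cpow n.cast_nonneg, Complex.ofReal_natCast]
  rw [Function.comp_apply, Complex.GammaSeq_eq_betaIntegral_of_re_pos (by simpa using hx), hcast,
    Complex.re_ofReal_mul, beta_eq_betaIntegralReal x (n + 1) hx (by positivity)]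
  norm_cast

theorem tendsto_rpow_mul_beta_add_nat {b x : ℝ} (hb : 0 < b) (hx : 0 < x) :
    Tendsto (fun n : ℕ => (n : ℝ) ^ b * beta b (x + (n + 1))) atTop (𝓝 (Gamma b)) := by
  have hΓ := (Gamma_pos_of_pos hx).ne'
  have hlim := ((tendsto_rpow_mul_beta_nat_add_one (add_pos hb hx)).div
    (tendsto_rpow_mul_beta_nat_add_one hx) hΓ).const_mul (beta b x)
  have hval : beta b x * (Gamma (b + x) / Gamma x) = Gamma b := by
    have := (Gamma_pos_of_pos (add_pos hb hx)).ne'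
    rw [beta]
    field_simp
  rw [hval] at hlim
  refine hlim.congr' ?_
  filter_upwards [eventually_gt_atTop 0] with n hn
  have hn' : (0 : ℝ) < n := Nat.cast_pos.2 hn
  have hβ := (beta_pos hx (show (0 : ℝ) < n + 1 by positivity)).ne'
  have hassoc : beta b x * beta (b + x) (n + 1) = beta x (n + 1) * beta b (x + (n + 1)) :=
    beta_mul_beta_add_left (add_pos hb hx) (by positivity)
  have hxn := (rpow_pos_of_pos hn' x).ne'
  rw [Pi.div_apply, rpow_add hn']
  field_simp
  exact hassoc

theorem tendsto_beta_add_nat_div_beta_add_nat {b x y : ℝ} (hb : 0 < b) (hx : 0 < x) (hy : 0 < y) :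
    Tendsto (fun n : ℕ => beta b (x + n) / beta b (y + n)) atTop (𝓝 1) := by
  rw [← tendsto_add_atTop_iff_nat 1]
  have hΓ := (Gamma_pos_of_pos hb).ne'
  have hlim := (tendsto_rpow_mul_beta_add_nat hb hx).div (tendsto_rpow_mul_beta_add_nat hb hy) hΓ
  rw [div_self hΓ] at hlim
  refine hlim.congr' ?_
  filter_upwards [eventually_gt_atTop 0] with n hn
  have hnb := (rpow_pos_of_pos (Nat.cast_pos.2 hn) b : (0 : ℝ) < (n : ℝ) ^ b).ne'
  rw [Pi.div_apply, mul_div_mul_left _ _ hnb, Nat.cast_add_one]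

theorem beta_mul_beta_eq_sub {b x y : ℝ} (hb : 0 < b) (hx : 0 < x) (hy : 0 < y) (hxy : x ≠ y) :
    beta (b + 1) x * beta (1 - b) (b + y) = Gamma b * Gamma (1 - b) / (x - y) *
      (beta b (x + 1) / beta b (y + 1) - beta b x / beta b y) := by
  have hβ := (beta_pos hb hy).ne'
  have hsub := sub_ne_zero.2 hxy
  rw [beta_one_sub hb (by positivity) (by linarith), show 1 - b + (b + y) = y + 1 by ring,
    beta_add_one_left hb.ne' (by positivity), beta_add_one_right hx.ne' (by positivity),
    beta_add_one_right hy.ne' (by positivity)]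
  field_simp
  ring

theorem beta_mul_beta_pos {b x y : ℝ} (hb : b ∈ Ioo (0 : ℝ) 1) (hx : 0 < x) (hy : 0 < y) (n : ℕ) :
    0 < beta (b + 1) (x + n) * beta (1 - b) (b + y + n) := by
  have := hb.1
  exact mul_pos (beta_pos (by positivity) (by positivity))
    (beta_pos (sub_pos.2 hb.2) (by positivity))

theorem hasSum_beta_mul_beta {b x y : ℝ} (hb : b ∈ Ioo (0 : ℝ) 1) (hx : 0 < x) (hy : 0 < y)
    (hxy : x ≠ y) :
    HasSum (fun n : ℕ => beta (b + 1) (x + n) * beta (1 - b) (b + y + n))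
      (Gamma b * Gamma (1 - b) / (x - y) * (1 - beta b x / beta b y)) := by
  rw [hasSum_iff_tendsto_nat_of_nonneg fun n => (beta_mul_beta_pos hb hx hy n).le]
  refine (((tendsto_beta_add_nat_div_beta_add_nat hb.1 hx hy).sub_const
    (beta b x / beta b y)).const_mul (Gamma b * Gamma (1 - b) / (x - y))).congr fun n => ?_
  have htelescope := Finset.sum_range_sub (fun n : ℕ => beta b (x + n) / beta b (y + n)) n
  rw [Nat.cast_zero, add_zero, add_zero] at htelescope
  rw [← htelescope, Finset.mul_sum]
  refine Finset.sum_congr rfl fun k _ => ?_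
  rw [add_assoc b, beta_mul_beta_eq_sub hb.1 (by positivity) (by positivity)
    fun h => hxy (add_right_cancel h), add_sub_add_right_eq_sub, Nat.cast_add_one, add_assoc,
    add_assoc]

end Beta

section Laplace

variable {E : Type*} [NormedAddCommGroup E] [NormedSpace ℝ E]

theorem hasDerivAt_one_sub_exp_neg (u : ℝ) :
    HasDerivAt (fun u => 1 - exp (-u)) (exp (-u)) u := by
  simpa using (hasDerivAt_neg u).exp.const_sub 1

theorem image_one_sub_exp_neg_Ioi : (fun u : ℝ => 1 - exp (-u)) '' Ioi 0 = Ioo 0 1 := by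
  ext t
  constructor
  · rintro ⟨u, hu, rfl⟩
    exact ⟨by simpa using hu, by simpa using exp_pos (-u)⟩
  · rintro ⟨h0, h1⟩
    have ht : 0 < 1 - t := sub_pos.2 h1
    exact ⟨-log (1 - t), neg_pos.2 (log_neg ht (by linarith)), by simp [exp_log ht]⟩

theorem integral_exp_neg_smul_comp_one_sub_exp_neg_Ioi (g : ℝ → E) :
    ∫ u in Ioi (0 : ℝ), exp (-u) • g (1 - exp (-u)) = ∫ t in Ioo (0 : ℝ) 1, g t := by
  rw [← image_one_sub_exp_neg_Ioi]
  refine (integral_image_eq_integral_deriv_smul_of_monotoneOn measurableSet_Ioi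
    (fun u _ => (hasDerivAt_one_sub_exp_neg u).hasDerivWithinAt) ?_ g).symm
  exact fun u _ v _ huv => sub_le_sub_left (exp_le_exp.2 (neg_le_neg huv)) 1

theorem intervalIntegral_exp_neg_smul_comp_one_sub_exp_neg (g : ℝ → E) (a : ℝ) :
    ∫ u in (0 : ℝ)..a, exp (-u) • g (1 - exp (-u)) = ∫ t in (0 : ℝ)..(1 - exp (-a)), g t := by
  simpa using intervalIntegral.integral_deriv_smul_comp_of_deriv_nonneg (g := g) (a := 0) (b := a)
    (f := fun u => 1 - exp (-u)) (by fun_prop) (fun u _ => hasDerivAt_one_sub_exp_neg u)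
    fun u _ => (exp_pos _).le

theorem integrableOn_exp_neg_mul_Ioi {q : ℝ} (hq : 0 < q) :
    IntegrableOn (fun a => exp (-(q * a))) (Ioi 0) := by
  simpa only [neg_mul] using integrableOn_exp_mul_Ioi (neg_lt_zero.2 hq) 0

theorem integral_exp_neg_mul_Ioi {q : ℝ} (hq : 0 < q) :
    ∫ a in Ioi (0 : ℝ), exp (-(q * a)) = q⁻¹ := by
  simpa [neg_div_neg_eq] using integral_exp_mul_Ioi (neg_lt_zero.2 hq) 0

-- The left-hand side is the convolution of `u ↦ exp (-(q * u)) • g u` with `u ↦ exp (-(q * u))`.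
theorem intervalIntegral_flip_lsmul_exp_neg (g : ℝ → E) (q a : ℝ) :
    ∫ u in (0 : ℝ)..a, (ContinuousLinearMap.lsmul ℝ ℝ : ℝ →L[ℝ] E →L[ℝ] E).flip
      (exp (-(q * u)) • g u) (exp (-(q * (a - u)))) =
    exp (-(q * a)) • ∫ u in (0 : ℝ)..a, g u := by
  rw [← intervalIntegral.integral_smul]
  refine intervalIntegral.integral_congr fun u _ => ?_
  rw [ContinuousLinearMap.flip_apply, ContinuousLinearMap.lsmul_apply, smul_smul, ← exp_add]
  ring_nf

theorem integrableOn_exp_neg_smul_primitive {g : ℝ → E} {q : ℝ} (hq : 0 < q)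
    (hg : IntegrableOn (fun u => exp (-(q * u)) • g u) (Ioi 0)) :
    IntegrableOn (fun a => exp (-(q * a)) • ∫ u in (0 : ℝ)..a, g u) (Ioi 0) := by
  have h := integrable_posConvolution hg (integrableOn_exp_neg_mul_Ioi hq)
    (ContinuousLinearMap.lsmul ℝ ℝ : ℝ →L[ℝ] E →L[ℝ] E).flip
  rw [posConvolution, integrable_indicator_iff measurableSet_Ioi] at h
  simpa only [intervalIntegral_flip_lsmul_exp_neg] using h

theorem integral_exp_neg_smul_primitive [CompleteSpace E] {g : ℝ → E} {q : ℝ} (hq : 0 < q)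
    (hg : IntegrableOn (fun u => exp (-(q * u)) • g u) (Ioi 0)) :
    ∫ a in Ioi (0 : ℝ), exp (-(q * a)) • ∫ u in (0 : ℝ)..a, g u =
      q⁻¹ • ∫ u in Ioi (0 : ℝ), exp (-(q * u)) • g u := by
  have h := integral_posConvolution hg (integrableOn_exp_neg_mul_Ioi hq)
    (ContinuousLinearMap.lsmul ℝ ℝ : ℝ →L[ℝ] E →L[ℝ] E).flip
  simp only [intervalIntegral_flip_lsmul_exp_neg] at h
  rw [h, ContinuousLinearMap.flip_apply, ContinuousLinearMap.lsmul_apply,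
    integral_exp_neg_mul_Ioi hq]

theorem exp_neg_smul_rpow_mul_one_sub_rpow (u v a : ℝ) :
    exp (-a) • ((1 - exp (-a)) ^ (u - 1) * (1 - (1 - exp (-a))) ^ (v - 1)) =
      exp (-(v * a)) * (1 - exp (-a)) ^ (u - 1) := by
  have hexp : exp (-(v * a)) = exp (-a) * exp (-a) ^ (v - 1) := by
    rw [← exp_mul, ← exp_add]
    ring_nf
  rw [hexp, sub_sub_cancel, smul_eq_mul]
  ring

theorem integral_exp_neg_mul_one_sub_exp_neg_rpow {u v : ℝ} (hu : 0 < u) (hv : 0 < v) :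
    ∫ a in Ioi (0 : ℝ), exp (-(v * a)) * (1 - exp (-a)) ^ (u - 1) = beta u v := by
  rw [← integral_Ioo_rpow_mul_one_sub_rpow hu hv, ← integral_exp_neg_smul_comp_one_sub_exp_neg_Ioi]
  exact integral_congr_ae (.of_forall fun a => (exp_neg_smul_rpow_mul_one_sub_rpow u v a).symm)

theorem integrableOn_exp_neg_mul_one_sub_exp_neg_rpow {u v : ℝ} (hu : 0 < u) (hv : 0 < v) :
    IntegrableOn (fun a => exp (-(v * a)) * (1 - exp (-a)) ^ (u - 1)) (Ioi 0) :=
  .of_integral_ne_zero (by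
    rw [integral_exp_neg_mul_one_sub_exp_neg_rpow hu hv]
    exact (beta_pos hu hv).ne')

/-- The incomplete beta integral `∫₀^{1 - e^{-a}} t ^ (b - 1) (1 - t) ^ (d - 1) dt`, which enters
the undershoot density. -/
noncomputable def incompleteBeta (b d a : ℝ) : ℝ :=
  ∫ t in (0 : ℝ)..(1 - exp (-a)), t ^ (b - 1) * (1 - t) ^ (d - 1)

theorem incompleteBeta_eq_integral (b d a : ℝ) :
    incompleteBeta b d a = ∫ u in (0 : ℝ)..a, exp (-(d * u)) * (1 - exp (-u)) ^ (b - 1) := by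
  rw [incompleteBeta, ← intervalIntegral_exp_neg_smul_comp_one_sub_exp_neg]
  exact intervalIntegral.integral_congr fun u _ => exp_neg_smul_rpow_mul_one_sub_rpow b d u

theorem integrableOn_exp_neg_smul_exp_neg_mul_one_sub_exp_neg_rpow {b d q : ℝ} (hb : 0 < b)
    (hdq : 0 < d + q) :
    IntegrableOn (fun u => exp (-(q * u)) • (exp (-(d * u)) * (1 - exp (-u)) ^ (b - 1)))
      (Ioi 0) := by
  simpa only [smul_eq_mul, ← mul_assoc, ← exp_add, ← neg_add, ← add_mul, add_comm q] using
    integrableOn_exp_neg_mul_one_sub_exp_neg_rpow hb hdq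

theorem integrableOn_exp_neg_mul_incompleteBeta {b d q : ℝ} (hb : 0 < b) (hq : 0 < q)
    (hdq : 0 < d + q) :
    IntegrableOn (fun a => exp (-(q * a)) * incompleteBeta b d a) (Ioi 0) := by
  simpa only [incompleteBeta_eq_integral, smul_eq_mul] using integrableOn_exp_neg_smul_primitive hq
    (integrableOn_exp_neg_smul_exp_neg_mul_one_sub_exp_neg_rpow hb hdq)

theorem integral_exp_neg_mul_incompleteBeta {b d q : ℝ} (hb : 0 < b) (hq : 0 < q)
    (hdq : 0 < d + q) :
    ∫ a in Ioi (0 : ℝ), exp (-(q * a)) * incompleteBeta b d a = beta b (d + q) / q := by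
  have h := integral_exp_neg_smul_primitive hq
    (integrableOn_exp_neg_smul_exp_neg_mul_one_sub_exp_neg_rpow hb hdq)
  simp only [smul_eq_mul, ← incompleteBeta_eq_integral] at h
  simp only [h, ← mul_assoc, ← exp_add, ← neg_add, ← add_mul, add_comm q]
  rw [integral_exp_neg_mul_one_sub_exp_neg_rpow hb hdq, inv_mul_eq_div]

end Laplace

section CrossingKernel

/-- The part of the undershoot density, weighted by the Laplace factors, that does not split as a
product: `e^{-xa} (1-e^{-a})^b · e^{-(b+y)w} (1-e^{-w})^{-b} / (1 - e^{-(a+w)})` at `(a, w)`. The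
exponent `b + y` is chosen so that the integral depends only on `beta b x` and `beta b y`, apart
from constants and the factor `1 / (x - y)`. -/
noncomputable def crossingKernel (b x y : ℝ) (z : ℝ × ℝ) : ℝ :=
  exp (-(x * z.1)) * (1 - exp (-z.1)) ^ b * (exp (-((b + y) * z.2)) * (1 - exp (-z.2)) ^ (-b)) *
    (1 - exp (-(z.1 + z.2)))⁻¹

/-- The `n`-th term of the expansion of `crossingKernel` in powers of `e^{-(a+w)}`; it is a product
of two beta integrands. -/
noncomputable def crossingTerm (b x y : ℝ) (n : ℕ) (z : ℝ × ℝ) : ℝ :=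
  exp (-((x + n) * z.1)) * (1 - exp (-z.1)) ^ b *
    (exp (-((b + y + n) * z.2)) * (1 - exp (-z.2)) ^ (-b))

variable {b x y : ℝ}

theorem crossingTerm_eq (b x y : ℝ) (n : ℕ) (z : ℝ × ℝ) :
    crossingTerm b x y n z = exp (-(x * z.1)) * (1 - exp (-z.1)) ^ b *
      (exp (-((b + y) * z.2)) * (1 - exp (-z.2)) ^ (-b)) * exp (-(z.1 + z.2)) ^ n := by
  have hexp : exp (-((x + n) * z.1)) * exp (-((b + y + n) * z.2)) =
      exp (-(x * z.1)) * exp (-((b + y) * z.2)) * exp (-(z.1 + z.2)) ^ n := by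
    rw [← exp_nat_mul, ← exp_add, ← exp_add, ← exp_add]
    ring_nf
  rw [crossingTerm, mul_mul_mul_comm, hexp]
  ring

theorem hasSum_crossingTerm (b x y : ℝ) {z : ℝ × ℝ} (hz : z ∈ Ioi (0 : ℝ) ×ˢ Ioi (0 : ℝ)) :
    HasSum (fun n => crossingTerm b x y n z) (crossingKernel b x y z) := by
  simp only [crossingTerm_eq]
  refine (hasSum_geometric_of_lt_one (exp_pos _).le ?_).mul_left _
  exact exp_lt_one_iff.2 (neg_lt_zero.2 (add_pos hz.1 hz.2))

theorem crossingTerm_nonneg (b x y : ℝ) (n : ℕ) {z : ℝ × ℝ}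
    (hz : z ∈ Ioi (0 : ℝ) ×ˢ Ioi (0 : ℝ)) : 0 ≤ crossingTerm b x y n z := by
  have h : ∀ {t : ℝ}, 0 < t → 0 < 1 - exp (-t) := fun ht => by simpa using ht
  have := h hz.1
  have := h hz.2
  unfold crossingTerm
  positivity

theorem integrableOn_crossingTerm (hb : b ∈ Ioo (0 : ℝ) 1) (hx : 0 < x) (hy : 0 < y) (n : ℕ) :
    IntegrableOn (crossingTerm b x y n) (Ioi 0 ×ˢ Ioi 0) := by
  obtain ⟨hb0, hb1⟩ := hb
  have hleft := integrableOn_exp_neg_mul_one_sub_exp_neg_rpow (u := b + 1) (v := x + n)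
    (by positivity) (by positivity)
  have hright := integrableOn_exp_neg_mul_one_sub_exp_neg_rpow (u := 1 - b) (v := b + y + n)
    (sub_pos.2 hb1) (by positivity)
  rw [add_sub_cancel_right] at hleft
  rw [sub_sub_cancel_left] at hright
  rw [IntegrableOn, Measure.volume_eq_prod, ← Measure.prod_restrict]
  exact hleft.mul_prod hright

theorem setIntegral_crossingTerm (hb : b ∈ Ioo (0 : ℝ) 1) (hx : 0 < x) (hy : 0 < y) (n : ℕ) :
    ∫ z in Ioi 0 ×ˢ Ioi 0, crossingTerm b x y n z =
      beta (b + 1) (x + n) * beta (1 - b) (b + y + n) := by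
  obtain ⟨hb0, hb1⟩ := hb
  rw [← integral_exp_neg_mul_one_sub_exp_neg_rpow (by positivity) (by positivity),
    ← integral_exp_neg_mul_one_sub_exp_neg_rpow (sub_pos.2 hb1) (by positivity),
    add_sub_cancel_right, sub_sub_cancel_left, Measure.volume_eq_prod]
  exact setIntegral_prod_mul (fun a => exp (-((x + n) * a)) * (1 - exp (-a)) ^ b)
    (fun w => exp (-((b + y + n) * w)) * (1 - exp (-w)) ^ (-b)) _ _

theorem setIntegral_crossingKernel (hb : b ∈ Ioo (0 : ℝ) 1) (hx : 0 < x) (hy : 0 < y)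
    (hxy : x ≠ y) :
    ∫ z in Ioi 0 ×ˢ Ioi 0, crossingKernel b x y z =
      Gamma b * Gamma (1 - b) / (x - y) * (1 - beta b x / beta b y) := by
  have hmeas : MeasurableSet (Ioi (0 : ℝ) ×ˢ Ioi (0 : ℝ)) :=
    measurableSet_Ioi.prod measurableSet_Ioi
  have hseries := hasSum_beta_mul_beta hb hx hy hxy
  have hnorm : ∀ n, ∫ z in Ioi 0 ×ˢ Ioi 0, ‖crossingTerm b x y n z‖ =
      beta (b + 1) (x + n) * beta (1 - b) (b + y + n) := fun n => by
    rw [← setIntegral_crossingTerm hb hx hy]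
    exact setIntegral_congr_fun hmeas fun z hz => norm_of_nonneg (crossingTerm_nonneg b x y n hz)
  have hsum := hasSum_integral_of_summable_integral_norm
    (fun n => integrableOn_crossingTerm hb hx hy n) (hseries.summable.congr fun n => (hnorm n).symm)
  simp only [setIntegral_crossingTerm hb hx hy] at hsum
  rw [← hsum.unique hseries]
  exact setIntegral_congr_fun hmeas fun z hz => (hasSum_crossingTerm b x y hz).tsum_eq.symm

theorem integrableOn_crossingKernel (hb : b ∈ Ioo (0 : ℝ) 1) (hx : 0 < x) (hy : 0 < y)
    (hxy : x ≠ y) :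
    IntegrableOn (crossingKernel b x y) (Ioi 0 ×ˢ Ioi 0) := by
  have hpos := beta_mul_beta_pos hb hx hy
  have hseries := hasSum_beta_mul_beta hb hx hy hxy
  refine .of_integral_ne_zero ?_
  rw [setIntegral_crossingKernel hb hx hy hxy, ← hseries.tsum_eq]
  exact (hseries.summable.tsum_pos (fun n => (hpos n).le) 0 (hpos 0)).ne'

end CrossingKernel

section SplitKernel

/-- The part of the undershoot density, weighted by the Laplace factors, that splits as a product:
`e^{-qa} incompleteBeta b d a · e^{-sw} (1-e^{-w})^{-b}` at `(a, w)`. -/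
noncomputable def splitKernel (b d q s : ℝ) (z : ℝ × ℝ) : ℝ :=
  exp (-(q * z.1)) * incompleteBeta b d z.1 * (exp (-(s * z.2)) * (1 - exp (-z.2)) ^ (-b))

variable {b d q s : ℝ}

theorem integrableOn_splitKernel (hb : b ∈ Ioo (0 : ℝ) 1) (hq : 0 < q) (hdq : 0 < d + q)
    (hs : 0 < s) : IntegrableOn (splitKernel b d q s) (Ioi 0 ×ˢ Ioi 0) := by
  have hright := integrableOn_exp_neg_mul_one_sub_exp_neg_rpow (sub_pos.2 hb.2) hs
  rw [sub_sub_cancel_left] at hright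
  rw [IntegrableOn, Measure.volume_eq_prod, ← Measure.prod_restrict]
  exact (integrableOn_exp_neg_mul_incompleteBeta hb.1 hq hdq).mul_prod hright

theorem setIntegral_splitKernel (hb : b ∈ Ioo (0 : ℝ) 1) (hq : 0 < q) (hdq : 0 < d + q)
    (hs : 0 < s) :
    ∫ z in Ioi 0 ×ˢ Ioi 0, splitKernel b d q s z = beta b (d + q) / q * beta (1 - b) s := by
  rw [← integral_exp_neg_mul_incompleteBeta hb.1 hq hdq,
    ← integral_exp_neg_mul_one_sub_exp_neg_rpow (sub_pos.2 hb.2) hs, sub_sub_cancel_left,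
    Measure.volume_eq_prod]
  exact setIntegral_prod_mul (fun a => exp (-(q * a)) * incompleteBeta b d a)
    (fun w => exp (-(s * w)) * (1 - exp (-w)) ^ (-b)) _ _

end SplitKernel

section Undershoot

variable {α ρ q β : ℝ}

theorem exp_mul_inv_exp_sub_exp_neg (α a w : ℝ) :
    exp ((α - 1) * a) * (exp a - exp (-w))⁻¹ =
      exp (-((2 - α) * a)) * (1 - exp (-(a + w)))⁻¹ := by
  have hexp : exp ((α - 1) * a) = exp (-((2 - α) * a)) * exp a := by
    rw [← exp_add]
    ring_nf
  have hsub : exp a - exp (-w) = exp a * (1 - exp (-(a + w))) := by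
    rw [mul_sub, mul_one, ← exp_add, neg_add, add_neg_cancel_left]
  rw [hexp, hsub, mul_inv, ← mul_assoc, mul_inv_cancel_right₀ (exp_ne_zero a)]

theorem exp_mul_undershootDensity (α ρ q β a w : ℝ) :
    exp (-q * a - β * w) * undershootDensity α ρ a w =
      sin (π * (α * (1 - ρ))) / π *
        (crossingKernel (α * (1 - ρ)) (2 - α + q) (2 - α + β) (a, w) +
          (1 - α * ρ) * splitKernel (α * (1 - ρ)) (2 - α) q (1 - α * ρ + β) (a, w)) := by
  have hincomplete : ∫ t in (0 : ℝ)..(1 - exp (-a)),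
      t ^ (α * (1 - ρ) - 1) * (1 - t) ^ (1 - α) = incompleteBeta (α * (1 - ρ)) (2 - α) a := by
    rw [incompleteBeta, show 2 - α - 1 = 1 - α by ring]
  have hfactor : exp (-q * a - β * w) * exp (-(1 - α * ρ) * w) =
      exp (-(q * a)) * exp (-((1 - α * ρ + β) * w)) := by
    rw [← exp_add, ← exp_add]
    ring_nf
  have ha : exp (-((2 - α + q) * a)) = exp (-(q * a)) * exp (-((2 - α) * a)) := by
    rw [← exp_add]
    ring_nf
  have hw : exp (-((α * (1 - ρ) + (2 - α + β)) * w)) =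
      exp (-((1 - α * ρ + β) * w)) * exp (-w) := by
    rw [← exp_add]
    ring_nf
  have hinv := exp_mul_inv_exp_sub_exp_neg α a w
  rw [undershootDensity, hincomplete, crossingKernel, splitKernel, ha, hw, mul_assoc π]
  linear_combination
    sin (π * (α * (1 - ρ))) / π * (1 - exp (-w)) ^ (-(α * (1 - ρ))) *
      ((exp ((α - 1) * a) * (1 - exp (-a)) ^ (α * (1 - ρ)) * exp (-w) *
          (exp a - exp (-w))⁻¹ + (1 - α * ρ) * incompleteBeta (α * (1 - ρ)) (2 - α) a) * hfactor +
        exp (-(q * a)) * exp (-((1 - α * ρ + β) * w)) * exp (-w) *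
          (1 - exp (-a)) ^ (α * (1 - ρ)) * hinv)

theorem kappaHat_eq_div_beta {lam : ℝ} (hb : 0 < α * (1 - ρ)) (hlam : 0 < 1 - α * ρ + lam) :
    kappaHat α ρ lam = lam * Gamma (α * (1 - ρ)) /
      ((1 - α * ρ + lam) * beta (α * (1 - ρ)) (2 - α + lam)) := by
  have := (Gamma_pos_of_pos hb).ne'
  have := (Gamma_pos_of_pos hlam).ne'
  rw [kappaHat, beta, show α * (1 - ρ) + (2 - α + lam) = 1 - α * ρ + lam + 1 by ring,
    Gamma_add_one hlam.ne']
  field_simp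

theorem sin_pi_mul_div_pi_mul_Gamma_mul_Gamma_one_sub {b : ℝ} (hb : b ∈ Ioo (0 : ℝ) 1) :
    sin (π * b) / π * (Gamma b * Gamma (1 - b)) = 1 := by
  have := (sin_pos_of_pos_of_lt_pi (mul_pos pi_pos hb.1) (mul_lt_of_lt_one_right pi_pos hb.2)).ne'
  have := pi_ne_zero
  rw [Gamma_mul_Gamma_one_sub]
  field_simp

theorem integral_integral_exp_mul_undershootDensity (hb : α * (1 - ρ) ∈ Ioo (0 : ℝ) 1)
    (hq : 0 < q) (hx : 0 < 2 - α + q) (hβ : 0 < 1 - α * ρ + β) (hqβ : q ≠ β) :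
    ∫ a in Ioi (0 : ℝ), ∫ w in Ioi (0 : ℝ),
        exp (-q * a - β * w) * undershootDensity α ρ a w =
      sin (π * (α * (1 - ρ))) / π *
      (Gamma (α * (1 - ρ)) * Gamma (1 - α * (1 - ρ)) / (q - β) *
          (1 - beta (α * (1 - ρ)) (2 - α + q) / beta (α * (1 - ρ)) (2 - α + β)) +
        (1 - α * ρ) *
          (beta (α * (1 - ρ)) (2 - α + q) / q * beta (1 - α * (1 - ρ)) (1 - α * ρ + β))) := by
  have hy : 0 < 2 - α + β := by linarith [hb.2]
  have hxy : 2 - α + q ≠ 2 - α + β := fun h => hqβ (add_left_cancel h)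
  have hcross := integrableOn_crossingKernel hb hx hy hxy
  have hsplit := (integrableOn_splitKernel hb hq hx hβ).const_mul (1 - α * ρ)
  have hintegrable := (hcross.add hsplit).const_mul (sin (π * (α * (1 - ρ))) / π)
  simp only [exp_mul_undershootDensity]
  refine (setIntegral_prod _ hintegrable).symm.trans ?_
  rw [← Measure.volume_eq_prod, integral_const_mul, integral_add' hcross hsplit,
    integral_const_mul, setIntegral_splitKernel hb hq hx hβ,
    setIntegral_crossingKernel hb hx hy hxy, add_sub_add_left_eq_sub]

theorem kappaHat_sub_div (hb : α * (1 - ρ) ∈ Ioo (0 : ℝ) 1) (hq : 0 < q)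
    (hq' : 0 < 1 - α * ρ + q) (hβ : 0 < 1 - α * ρ + β) (hqβ : q ≠ β) :
    (kappaHat α ρ q - kappaHat α ρ β) / ((q - β) * kappaHat α ρ q) =
      (1 - beta (α * (1 - ρ)) (2 - α + q) / beta (α * (1 - ρ)) (2 - α + β)) / (q - β) +
        (1 - α * ρ) * (beta (α * (1 - ρ)) (2 - α + q) / q /
          ((1 - α * ρ + β) * beta (α * (1 - ρ)) (2 - α + β))) := by
  have hA := (beta_pos hb.1 (show 0 < 2 - α + q by linarith [hb.2])).ne'
  have hD := (beta_pos hb.1 (show 0 < 2 - α + β by linarith [hb.2])).ne'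
  have hG := (Gamma_pos_of_pos hb.1).ne'
  have hsub := sub_ne_zero.2 hqβ
  rw [kappaHat_eq_div_beta hb.1 hq', kappaHat_eq_div_beta hb.1 hβ]
  field_simp
  ring

theorem second_factorisation_identity_general (hb : α * (1 - ρ) ∈ Ioo (0 : ℝ) 1) (hq : 0 < q)
    (hq' : 0 < 1 - α * ρ + q) (hβ : 0 < 1 - α * ρ + β) (hqβ : q ≠ β) :
    ∫ a in Ioi (0 : ℝ), ∫ w in Ioi (0 : ℝ),
        exp (-q * a - β * w) * undershootDensity α ρ a w =
      (kappaHat α ρ q - kappaHat α ρ β) / ((q - β) * kappaHat α ρ q) := by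
  have hx : 0 < 2 - α + q := by linarith [hb.2]
  have hrefl := sin_pi_mul_div_pi_mul_Gamma_mul_Gamma_one_sub hb
  rw [integral_integral_exp_mul_undershootDensity hb hq hx hβ hqβ,
    beta_one_sub hb.1 hβ (add_pos (sub_pos.2 hb.2) hβ),
    show 1 - α * (1 - ρ) + (1 - α * ρ + β) = 2 - α + β by ring,
    kappaHat_sub_div hb hq hq' hβ hqβ]
  linear_combination
    ((1 - beta (α * (1 - ρ)) (2 - α + q) / beta (α * (1 - ρ)) (2 - α + β)) / (q - β) +
        (1 - α * ρ) * (beta (α * (1 - ρ)) (2 - α + q) / q /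
          ((1 - α * ρ + β) * beta (α * (1 - ρ)) (2 - α + β)))) * hrefl

theorem mul_mem_Ioo_zero_one {α ρ : ℝ} (hα : 1 < α) (hρ : ρ ∈ Ioo (1 - 1 / α) (1 / α)) :
    α * ρ ∈ Ioo (0 : ℝ) 1 := by
  have hα0 : 0 < α := one_pos.trans hα
  have hinv : 1 / α < 1 := (div_lt_one hα0).2 hα
  exact ⟨mul_pos hα0 ((sub_pos.2 hinv).trans hρ.1), (lt_div_iff₀' hα0).1 hρ.2⟩

end Undershoot

theorem second_factorisation_identity
    (α ρ : ℝ) (hα : α ∈ Set.Ioo (1:ℝ) 2) (hρ : ρ ∈ Set.Ioo (1 - 1/α) (1/α))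
    (q β : ℝ) (hq : 0 < q) (hβ : 0 < β) (hqβ : q ≠ β) :
    ∫ a in Set.Ioi (0:ℝ), ∫ w in Set.Ioi (0:ℝ),
        Real.exp (-q * a - β * w) * undershootDensity α ρ a w =
    (kappaHat α ρ q - kappaHat α ρ β) / ((q - β) * kappaHat α ρ q) := by
  have hb : α * (1 - ρ) ∈ Ioo (0 : ℝ) 1 :=
    mul_mem_Ioo_zero_one hα.1 ⟨by linarith [hρ.2], by linarith [hρ.1]⟩
  have hρ' : 0 < 1 - α * ρ := sub_pos.2 (mul_mem_Ioo_zero_one hα.1 hρ).2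
  exact second_factorisation_identity_general hb hq (by positivity) (by positivity) hqβ
end
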